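/- arXiv:2301.01272 — 5 statements merged into one kernel-verified Lean document; each statement's English description precedes it below -/
import Mathlib

section
/- Let P be an n×n real matrix (n ≥ 1) that has at least one nested sequence of principal minors M_1, …, M_n such that (−1)^k·M_k > 0 for every k = 1, …, n. Then there exists an n×n diagonal matrix D with positive diagonal entries such that all eigenvalues of D·P are real, negative and distinct. -/
open Matrix Polynomial

lemma aux_zero {n : ℕ} (P : Matrix (Fin n) (Fin n) ℝ) (d : Fin n → ℝ) (hd : ∀ i, 0 < d i)
    (hP : 0 < (-1 : ℝ) ^ n * P.det) : 0 < (Matrix.diagonal d * P).charpoly.eval 0 := by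
  have h : (Matrix.diagonal d * P).charpoly.eval 0 = (∏ i, d i) * ((-1 : ℝ) ^ n * P.det) := by
    rw [Matrix.eval_charpoly]
    simp only [map_zero, zero_sub, Matrix.det_neg, Matrix.det_mul, Matrix.det_diagonal,
      Fintype.card_fin]
    ring
  rw [h]
  exact mul_pos (Finset.prod_pos fun i _ => hd i) hP

lemma aux_snoc {n : ℕ} (P : Matrix (Fin (n+1)) (Fin (n+1)) ℝ) (d : Fin n → ℝ) (x : ℝ) :
    (Matrix.diagonal (Fin.snoc d 0 : Fin (n+1) → ℝ) * P).charpoly.eval x =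
      x * (Matrix.diagonal d * P.submatrix Fin.castSucc Fin.castSucc).charpoly.eval x := by
  rw [Matrix.eval_charpoly, Matrix.eval_charpoly, Matrix.det_succ_row _ (Fin.last n),
    Fin.sum_univ_castSucc]
  have h0 : ∀ i : Fin n, (Matrix.scalar (Fin (n+1)) x - Matrix.diagonal (Fin.snoc d 0 : Fin (n+1) → ℝ) * P)
      (Fin.last n) i.castSucc = 0 := by
    intro i
    simp [Matrix.diagonal_mul, Matrix.diagonal_apply, (Fin.castSucc_lt_last i).ne']
  have h1 : (Matrix.scalar (Fin (n+1)) x - Matrix.diagonal (Fin.snoc d 0 : Fin (n+1) → ℝ) * P)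
      (Fin.last n) (Fin.last n) = x := by
    simp [Matrix.diagonal_mul, Matrix.diagonal_apply]
  simp only [h0, h1]
  have h2 : (Matrix.scalar (Fin (n+1)) x - Matrix.diagonal (Fin.snoc d 0 : Fin (n+1) → ℝ) * P).submatrix
      (Fin.last n).succAbove (Fin.last n).succAbove =
      Matrix.scalar (Fin n) x - Matrix.diagonal d * P.submatrix Fin.castSucc Fin.castSucc := by
    ext i j
    simp [Matrix.diagonal_mul, Matrix.diagonal_apply]
  rw [h2]
  simp [← two_mul, pow_mul]

lemma aux_cont {n : ℕ} (P : Matrix (Fin (n+1)) (Fin (n+1)) ℝ) (d : Fin n → ℝ) (x : ℝ) :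
    Continuous fun e : ℝ =>
      (Matrix.diagonal (Fin.snoc d e : Fin (n+1) → ℝ) * P).charpoly.eval x := by
  simp only [Matrix.eval_charpoly]
  apply Continuous.matrix_det
  apply Continuous.sub continuous_const
  apply Continuous.matrix_mul _ continuous_const
  apply Continuous.matrix_diagonal
  refine continuous_pi fun i => ?_
  refine Fin.lastCases ?_ (fun i => ?_) i
  · simpa using (continuous_id' : Continuous fun a : ℝ => a)
  · simpa using continuous_const

lemma aux_core (n : ℕ) : ∀ P : Matrix (Fin n) (Fin n) ℝ,
    (∀ k (h : k ≤ n), 0 < (-1 : ℝ) ^ k * (P.submatrix (Fin.castLE h) (Fin.castLE h)).det) →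
    ∃ d : Fin n → ℝ, (∀ i, 0 < d i) ∧ ∃ c : Fin n → ℝ, StrictAnti c ∧ (∀ i, c i < 0) ∧
      ∀ i : Fin n, 0 < (-1 : ℝ) ^ ((i : ℕ) + 1) * (Matrix.diagonal d * P).charpoly.eval (c i) := by
  induction n with
  | zero =>
    intro P _
    exact ⟨fun _ => 1, fun i => i.elim0, fun _ => 0, fun i => i.elim0, fun i => i.elim0,
      fun i => i.elim0⟩
  | succ n ih =>
    intro P hP
    set P' := P.submatrix Fin.castSucc Fin.castSucc with hP'
    have hsub : ∀ k (h : k ≤ n),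
        0 < (-1 : ℝ) ^ k * (P'.submatrix (Fin.castLE h) (Fin.castLE h)).det :=
      fun k h => hP k (h.trans n.le_succ)
    obtain ⟨d, hd, c, hc, hc0, hs⟩ := ih P' hsub
    have hz := aux_zero P' d hd (by simpa using hsub n le_rfl)
    set q := (Matrix.diagonal d * P').charpoly with hq
    -- choose b
    have e1 : ∀ᶠ b in nhdsWithin (0 : ℝ) (Set.Iio 0), 0 < q.eval b :=
      (q.continuous.continuousAt.eventually (lt_mem_nhds hz)).filter_mono nhdsWithin_le_nhds
    have e2 : ∀ᶠ b in nhdsWithin (0 : ℝ) (Set.Iio 0), ∀ i, c i < b :=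
      Filter.eventually_all.2 fun i =>
        (lt_mem_nhds (hc0 i)).filter_mono nhdsWithin_le_nhds
    obtain ⟨b, hb1, hb2, hb3⟩ := (e1.and (e2.and self_mem_nhdsWithin)).exists
    have hb3 : b < 0 := hb3
    let c' : Fin (n+1) → ℝ := Fin.cons b c
    have hc'0 : ∀ i, c' i < 0 := by
      intro i
      refine Fin.cases ?_ (fun i => ?_) i
      · simpa [c'] using hb3
      · simpa [c'] using hc0 i
    have hs0 : ∀ i : Fin (n+1), 0 < (-1 : ℝ) ^ ((i : ℕ) + 1) *
        (Matrix.diagonal (Fin.snoc d 0 : Fin (n+1) → ℝ) * P).charpoly.eval (c' i) := by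
      intro i
      rw [aux_snoc]
      refine Fin.cases ?_ (fun i => ?_) i
      · simp only [c', Fin.cons_zero, Fin.val_zero]
        have := mul_pos (neg_pos.2 hb3) hb1
        rw [← hP', ← hq, zero_add, pow_one]
        linarith
      · simp only [c', Fin.cons_succ, Fin.val_succ]
        have := mul_pos (neg_pos.2 (hc0 i)) (hs i)
        rw [← hP', ← hq, pow_succ]
        linarith
    have e3 : ∀ᶠ e in nhdsWithin (0 : ℝ) (Set.Ioi 0), ∀ i : Fin (n+1), 0 < (-1 : ℝ) ^ ((i : ℕ) + 1) *
        (Matrix.diagonal (Fin.snoc d e : Fin (n+1) → ℝ) * P).charpoly.eval (c' i) :=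
      Filter.eventually_all.2 fun i =>
        (((continuous_const.mul (aux_cont P d (c' i))).continuousAt (x := (0 : ℝ))).eventually
          (lt_mem_nhds (hs0 i))).filter_mono nhdsWithin_le_nhds
    obtain ⟨e, he, he0⟩ := (e3.and self_mem_nhdsWithin).exists
    have he0 : 0 < e := he0
    refine ⟨Fin.snoc d e, ?_, c', ?_, hc'0, he⟩
    · intro i
      refine Fin.lastCases ?_ (fun i => ?_) i
      · simpa using he0
      · simpa using hd i
    · intro i j
      refine Fin.cases ?_ (fun j => ?_) j
      · intro h; simp at h
      · refine Fin.cases ?_ (fun i => ?_) i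
        · intro _; simpa [c'] using hb2 j
        · intro h; simpa [c'] using hc (Fin.succ_lt_succ_iff.1 h)

lemma aux_roots {n : ℕ} (p : ℝ[X]) (hp : p.Monic) (hdeg : p.natDegree = n) (h0 : 0 < p.eval 0)
    (c : Fin n → ℝ) (hc : StrictAnti c) (hc0 : ∀ i, c i < 0)
    (hs : ∀ i : Fin n, 0 < (-1 : ℝ) ^ ((i : ℕ) + 1) * p.eval (c i)) :
    ∃ μ : Fin n → ℝ, Function.Injective μ ∧ (∀ i, μ i < 0) ∧ p = ∏ i, (X - C (μ i)) := by
  let a : Fin (n+1) → ℝ := Fin.cons 0 c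
  have ha : StrictAnti a := by
    intro i j
    refine Fin.cases ?_ (fun j => ?_) j
    · intro h; simp at h
    · refine Fin.cases ?_ (fun i => ?_) i
      · intro _; simpa [a] using hc0 j
      · intro h; simpa [a] using hc (Fin.succ_lt_succ_iff.1 h)
  have hsa : ∀ i : Fin (n+1), 0 < (-1 : ℝ) ^ (i : ℕ) * p.eval (a i) := by
    intro i
    refine Fin.cases ?_ (fun i => ?_) i
    · simpa [a] using h0
    · simpa [a] using hs i
  have key : ∀ i : Fin n, ∃ x, a i.succ < x ∧ x < a i.castSucc ∧ p.eval x = 0 := by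
    intro i
    have h1 := hsa i.succ
    have h2 := hsa i.castSucc
    simp only [Fin.val_succ, Fin.val_castSucc] at h1 h2
    have hlt : a i.succ < a i.castSucc := ha i.castSucc_lt_succ
    have := intermediate_value_Ioo hlt.le
      (f := fun x => (-1 : ℝ) ^ (i : ℕ) * p.eval x)
      ((continuous_const.mul p.continuous).continuousOn)
    obtain ⟨x, hx, hx0⟩ := this (show (0 : ℝ) ∈ _ from ⟨by rw [pow_succ] at h1; linarith, h2⟩)
    exact ⟨x, hx.1, hx.2, by simpa using hx0⟩
  choose μ h1 h2 h3 using key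
  have hanti : StrictAnti μ := by
    intro i j hij
    refine (h2 j).trans_le (le_trans (ha.antitone ?_) (h1 i).le)
    rw [Fin.le_def]; simpa using hij
  refine ⟨μ, hanti.injective, fun i => (h2 i).trans_le ?_, ?_⟩
  · have := ha.antitone (Fin.zero_le i.castSucc)
    simpa [a] using this
  · have hdvd : (∏ i, (X - C (μ i))) ∣ p := by
      apply Finset.prod_dvd_of_coprime
      · intro i _ j _ hij
        exact Polynomial.pairwise_coprime_X_sub_C hanti.injective hij
      · intro i _
        exact Polynomial.dvd_iff_isRoot.2 (h3 i)
    have hm : (∏ i, (X - C (μ i))).Monic := monic_prod_of_monic _ _ fun i _ => monic_X_sub_C _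
    refine (Polynomial.eq_of_dvd_of_natDegree_le_of_leadingCoeff hdvd ?_ ?_).symm
    · rw [hdeg, Polynomial.natDegree_prod_of_monic _ _ fun i _ => monic_X_sub_C _]
      simp
    · rw [hm.leadingCoeff, hp.leadingCoeff]

/-- **Fisher's theorem.** If a real `n × n` matrix `P` (`n ≥ 1`) has a nested
sequence of principal minors `M_1, …, M_n` (associated with a chain of index
sets `S 0 ⊂ S 1 ⊂ ⋯` with `|S k| = k + 1`) such that `(-1)^k * M_k > 0` for
every `k = 1, …, n`, then there exists a positive diagonal matrix `D` such that
all eigenvalues of `D * P` are real, negative and distinct. -/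
theorem fisher_nested_minors {n : ℕ} (hn : 1 ≤ n) (P : Matrix (Fin n) (Fin n) ℝ)
    (S : Fin n → Finset (Fin n))
    (hcard : ∀ k : Fin n, (S k).card = (k : ℕ) + 1)
    (hchain : ∀ k l : Fin n, k ≤ l → S k ⊆ S l)
    (hsign : ∀ k : Fin n,
      0 < (-1 : ℝ) ^ ((k : ℕ) + 1) *
        (P.submatrix (fun i : S k => (i : Fin n)) (fun i : S k => (i : Fin n))).det) :
    ∃ d : Fin n → ℝ, (∀ i, 0 < d i) ∧
      ∃ μ : Fin n → ℝ, Function.Injective μ ∧ (∀ i, μ i < 0) ∧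
        (Matrix.diagonal d * P).charpoly = ∏ i, (X - C (μ i)) := by
  have hex : ∀ k : Fin n, ∃ x, x ∈ S k ∧ ∀ j, j < k → x ∉ S j := by
    intro k
    by_cases hk : (k : ℕ) = 0
    · have : (S k).Nonempty := Finset.card_pos.1 (by rw [hcard]; omega)
      obtain ⟨x, hx⟩ := this
      refine ⟨x, hx, fun j hj => ?_⟩
      rw [Fin.lt_def] at hj; omega
    · let k' : Fin n := ⟨k - 1, by omega⟩
      obtain ⟨x, hx, hx'⟩ := Finset.exists_mem_notMem_of_card_lt_card
        (s := S k') (t := S k) (by rw [hcard, hcard]; simp only [k']; omega)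
      refine ⟨x, hx, fun j hj hxj => hx' (hchain j k' ?_ hxj)⟩
      rw [Fin.le_def]; rw [Fin.lt_def] at hj; simp only [k']; omega
  choose s hs1 hs2 using hex
  have hinj : Function.Injective s := by
    intro i j hij
    rcases lt_trichotomy i j with h | h | h
    · exact absurd (hij ▸ hs1 i) (hs2 j i h)
    · exact h
    · exact absurd (hij ▸ hs1 j) (hs2 i j h)
  let σ : Fin n ≃ Fin n := Equiv.ofBijective s (Finite.injective_iff_bijective.1 hinj)
  let Q := P.submatrix σ σ
  have hQ : ∀ k (h : k ≤ n),
      0 < (-1 : ℝ) ^ k * (Q.submatrix (Fin.castLE h) (Fin.castLE h)).det := by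
    intro k h
    rcases k with _ | k
    · simp
    · let K : Fin n := ⟨k, h⟩
      let f : Fin (k+1) → S K := fun i => ⟨s (Fin.castLE h i), hchain (Fin.castLE h i) K
        (by rw [Fin.le_def]; simp only [Fin.val_castLE, K]; omega) (hs1 _)⟩
      have hf : Function.Bijective f := by
        rw [Fintype.bijective_iff_injective_and_card]
        constructor
        · intro i j hij
          exact Fin.castLE_injective h (hinj (congrArg Subtype.val hij))
        · simp [hcard, K]
      have h1 := hsign K
      rw [← Matrix.det_submatrix_equiv_self (Equiv.ofBijective f hf)] at h1
      exact h1
  obtain ⟨d, hd, c, hc, hc0, hs⟩ := aux_core n Q hQ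
  have hz := aux_zero Q d hd (by simpa using hQ n le_rfl)
  obtain ⟨μ, h1, h2, h3⟩ := aux_roots _ (Matrix.charpoly_monic _)
    (by simp [Matrix.charpoly_natDegree_eq_dim]) hz c hc hc0 hs
  refine ⟨d ∘ σ.symm, fun i => hd _, μ, h1, h2, ?_⟩
  rw [← h3, ← Matrix.charpoly_reindex σ.symm]
  congr 1
  ext i j
  simp [Q, Matrix.diagonal_mul]
end

section
/- Let A be an n×n complex matrix (n ≥ 1) all of whose leading principal minors are nonzero. Then there exists an n×n complex diagonal matrix D such that all eigenvalues of D·A are real, positive and simple. -/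
open Matrix Polynomial

noncomputable section

/-- rescaled pencil -/
def bM {n : ℕ} (A : Matrix (Fin n) (Fin n) ℂ) (j : Fin n) (x : Fin n → ℂ) (t : ℂ) :
    Matrix (Fin n) (Fin n) ℂ :=
  Matrix.of fun i k => t ^ (j.val - i.val) * (1 : Matrix (Fin n) (Fin n) ℂ) i k
    - t ^ (i.val - j.val) * x i * A i k

/-- first `k` rows from `A`, remaining rows from the identity -/
def bQ {n : ℕ} (A : Matrix (Fin n) (Fin n) ℂ) (k : ℕ) : Matrix (Fin n) (Fin n) ℂ :=
  Matrix.of fun i l => if i.val < k then A i l else (1 : Matrix (Fin n) (Fin n) ℂ) i l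

lemma bQ_ne {n : ℕ} (A : Matrix (Fin n) (Fin n) ℂ)
    (hminors : ∀ k : Fin n,
      (A.submatrix (Fin.castLE k.isLt) (Fin.castLE k.isLt)).det ≠ 0) (k : ℕ) (hk : k ≤ n) :
    (bQ A k).det ≠ 0 := by
  rcases k with _ | m
  · have : bQ A 0 = 1 := by ext i l; simp [bQ]
    rw [this]; simp
  · rw [Matrix.twoBlockTriangular_det (bQ A (m+1)) (fun i => i.val < m + 1)]
    · have h2 : (bQ A (m+1)).toSquareBlockProp (fun i => ¬ i.val < m + 1) = 1 := by
        ext i l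
        have := i.2
        simp only [Matrix.toSquareBlockProp_def, bQ, Matrix.of_apply, if_neg this,
          Matrix.one_apply, Subtype.ext_iff]
      rw [h2, Matrix.det_one, mul_one]
      let e : Fin (m+1) ≃ {i : Fin n // i.val < m + 1} :=
        { toFun := fun a => ⟨Fin.castLE hk a, a.isLt⟩
          invFun := fun a => ⟨a.1.val, a.2⟩
          left_inv := fun a => by ext; rfl
          right_inv := fun a => by ext; rfl }
      rw [← Matrix.det_submatrix_equiv_self e]
      convert hminors ⟨m, hk⟩ using 2
      ext a b
      simp only [Matrix.toSquareBlockProp_def, bQ, Matrix.of_apply, Matrix.submatrix_apply]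
      exact if_pos a.isLt
    · intro i hi l hl
      simp only [bQ, Matrix.of_apply, if_neg hi]
      apply Matrix.one_apply_ne
      rintro rfl
      exact hi hl

/-- scaling factor -/
def bc {n : ℕ} (k : ℕ) (x : Fin n → ℂ) : ℂ := ∏ i : Fin n, if i.val < k then - x i else 1

lemma bc_succ {n : ℕ} (j : Fin n) (x : Fin n → ℂ) :
    bc (j.val + 1) x = bc j.val x * (- x j) := by
  unfold bc
  rw [← Finset.mul_prod_erase _ _ (Finset.mem_univ j),
    ← Finset.mul_prod_erase _ (fun i : Fin n => if i.val < j.val then - x i else 1)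
      (Finset.mem_univ j)]
  simp only [lt_irrefl, if_false, one_mul, Nat.lt_succ_self, if_true]
  rw [mul_comm]
  congr 1
  apply Finset.prod_congr rfl
  intro i hi
  have : i.val ≠ j.val := fun h => (Finset.ne_of_mem_erase hi) (Fin.ext h)
  congr 1
  simp only [eq_iff_iff]
  omega

lemma det_scaled {n : ℕ} (A : Matrix (Fin n) (Fin n) ℂ) (k : ℕ) (x : Fin n → ℂ) :
    (Matrix.of fun i l : Fin n => (if i.val < k then - x i else 1) * bQ A k i l).det
      = bc k x * (bQ A k).det :=
  Matrix.det_mul_column _ _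

lemma bM_zero {n : ℕ} (A : Matrix (Fin n) (Fin n) ℂ) (j : Fin n) (x : Fin n → ℂ) :
    (bM A j x 0).det = bc j.val x * ((bQ A j.val).det - x j * (bQ A (j.val+1)).det) := by
  have h : (bM A j x 0).det
      = (Matrix.of fun i l : Fin n => (if i.val < j.val then - x i else 1) * bQ A j.val i l).det
       + (Matrix.of fun i l : Fin n =>
          (if i.val < j.val+1 then - x i else 1) * bQ A (j.val+1) i l).det := by
    set B := bM A j x 0 with hB
    have h0 : B = B.updateRow j
        ((1 : Matrix (Fin n) (Fin n) ℂ) j + fun l => - x j * A j l) := by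
      ext i l
      by_cases hi : i = j
      · subst hi; simp [hB, bM, sub_eq_add_neg]
      · simp [Matrix.updateRow_ne hi]
    rw [h0, Matrix.det_updateRow_add]
    congr 2
    · ext i l
      by_cases hi : i = j
      · subst hi; simp [bQ]
      · have hv : i.val ≠ j.val := fun h => hi (Fin.ext h)
        rw [Matrix.updateRow_ne hi]
        rcases lt_or_gt_of_ne hv with h | h
        · have e1 : j.val - i.val ≠ 0 := by omega
          have e2 : i.val - j.val = 0 := by omega
          simp only [hB, bM, bQ, e2, Matrix.of_apply, if_pos h, zero_pow e1]
          simp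
        · have e1 : j.val - i.val = 0 := by omega
          have e2 : i.val - j.val ≠ 0 := by omega
          have e3 : ¬ i.val < j.val := by omega
          simp only [hB, bM, bQ, e1, Matrix.of_apply, if_neg e3, zero_pow e2]
          simp
    · ext i l
      by_cases hi : i = j
      · subst hi; simp [bQ]
      · have hv : i.val ≠ j.val := fun h => hi (Fin.ext h)
        rw [Matrix.updateRow_ne hi]
        rcases lt_or_gt_of_ne hv with h | h
        · have e1 : j.val - i.val ≠ 0 := by omega
          have e2 : i.val - j.val = 0 := by omega
          have e3 : i.val < j.val + 1 := by omega
          simp only [hB, bM, bQ, e2, Matrix.of_apply, if_pos e3, zero_pow e1]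
          simp
        · have e1 : j.val - i.val = 0 := by omega
          have e2 : i.val - j.val ≠ 0 := by omega
          have e3 : ¬ i.val < j.val + 1 := by omega
          simp only [hB, bM, bQ, e1, Matrix.of_apply, if_neg e3, zero_pow e2]
          simp
  rw [h, det_scaled, det_scaled, bc_succ]
  ring

/-- the map to invert -/
def bPhi {n : ℕ} (A : Matrix (Fin n) (Fin n) ℂ) (p : (Fin n → ℂ) × ℂ) : (Fin n → ℂ) × ℂ :=
  (fun j => (bM A j p.1 p.2).det, p.2)

lemma bPhi_contDiff {n : ℕ} (A : Matrix (Fin n) (Fin n) ℂ) : ContDiff ℂ 1 (bPhi A) := by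
  unfold bPhi
  refine ContDiff.prodMk ?_ contDiff_snd
  rw [contDiff_pi]
  intro j
  simp only [Matrix.det_apply', bM, Matrix.of_apply]
  refine ContDiff.sum fun σ _ => contDiff_const.mul (contDiff_prod fun i _ => ?_)
  have h1 : ContDiff ℂ 1 fun p : (Fin n → ℂ) × ℂ => p.1 (σ i) :=
    (contDiff_apply ℂ ℂ (σ i)).comp contDiff_fst
  exact ((contDiff_snd.pow _).mul contDiff_const).sub
    (((contDiff_snd.pow _).mul h1).mul contDiff_const)

lemma exists_sol {n : ℕ} (A : Matrix (Fin n) (Fin n) ℂ)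
    (hQ : ∀ k ≤ n, (bQ A k).det ≠ 0) :
    ∀ᶠ t : ℂ in nhds 0, ∃ x : Fin n → ℂ, ∀ j, (bM A j x t).det = 0 := by
  set x0 : Fin n → ℂ := fun j => (bQ A j.val).det / (bQ A (j.val+1)).det with hx0
  have hx0ne : ∀ j, x0 j ≠ 0 := fun j => div_ne_zero (hQ _ j.isLt.le) (hQ _ j.isLt)
  have hx0eq : ∀ j, x0 j * (bQ A (j.val+1)).det = (bQ A j.val).det := fun j =>
    div_mul_cancel₀ _ (hQ _ j.isLt)
  have hc : ∀ k, bc k x0 ≠ 0 := by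
    intro k
    refine Finset.prod_ne_zero_iff.2 fun i _ => ?_
    split_ifs
    · exact neg_ne_zero.2 (hx0ne i)
    · exact one_ne_zero
  have hS : HasStrictFDerivAt (bPhi A) (fderiv ℂ (bPhi A) (x0, 0)) (x0, 0) :=
    (bPhi_contDiff A).contDiffAt.hasStrictFDerivAt one_ne_zero
  set L := fderiv ℂ (bPhi A) (x0, 0) with hL
  have hinj : Function.Injective (L : ((Fin n → ℂ) × ℂ) →ₗ[ℂ] ((Fin n → ℂ) × ℂ)) := by
    rw [injective_iff_map_eq_zero]
    rintro ⟨v, s⟩ hvs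
    have hvs : L (v, s) = 0 := hvs
    have hs : s = 0 := by
      have h1 : HasFDerivAt (fun p => (bPhi A p).2)
          ((ContinuousLinearMap.snd ℂ (Fin n → ℂ) ℂ).comp L) (x0, 0) := hS.hasFDerivAt.snd
      have h2 : HasFDerivAt (fun p : (Fin n → ℂ) × ℂ => (bPhi A p).2)
          (ContinuousLinearMap.snd ℂ (Fin n → ℂ) ℂ) (x0, 0) := hasFDerivAt_snd
      have := congrArg (fun f => f (v, s)) (h1.unique h2)
      simp [hvs] at this
      exact this.symm
    subst hs
    have hline : HasDerivAt (fun τ : ℂ => ((x0 + τ • v, 0) : (Fin n → ℂ) × ℂ)) (v, 0) 0 := by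
      refine HasDerivAt.prodMk ?_ (hasDerivAt_const _ _)
      simpa using ((hasDerivAt_id (0:ℂ)).smul_const v).const_add x0
    have hS' : HasFDerivAt (bPhi A) L ((fun τ : ℂ => ((x0 + τ • v, 0) : (Fin n → ℂ) × ℂ)) 0) := by
      simpa using hS.hasFDerivAt
    have hcomp := HasFDerivAt.comp_hasDerivAt
      (f := fun τ : ℂ => ((x0 + τ • v, 0) : (Fin n → ℂ) × ℂ)) (0:ℂ) hS' hline
    rw [hvs] at hcomp
    have hv : v = 0 := by
      ext j
      have h1 : HasDerivAt (fun τ : ℂ => (bM A j (x0 + τ • v) 0).det) 0 0 := by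
        have := (hasDerivAt_pi.1 hcomp.fst) j
        exact this
      have hdc : DifferentiableAt ℂ (fun τ : ℂ => bc j.val (x0 + τ • v)) 0 := by
        unfold bc
        refine DifferentiableAt.fun_finsetProd fun i _ => ?_
        split_ifs
        · simp only [Pi.add_apply, Pi.smul_apply, smul_eq_mul]
          fun_prop
        · fun_prop
      have h2 : HasDerivAt (fun τ : ℂ => bc j.val (x0 + τ • v) *
          (τ * (-(v j * (bQ A (j.val+1)).det)))) _ 0 :=
        hdc.hasDerivAt.mul ((hasDerivAt_id (0:ℂ)).mul_const _)
      have heq : (fun τ : ℂ => (bM A j (x0 + τ • v) 0).det) = fun τ : ℂ =>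
          bc j.val (x0 + τ • v) * (τ * (-(v j * (bQ A (j.val+1)).det))) := by
        funext τ
        rw [bM_zero, ← hx0eq j]
        simp only [Pi.add_apply, Pi.smul_apply, smul_eq_mul]
        ring
      rw [heq] at h1
      have := h1.unique h2
      simp [hc, hQ _ j.isLt] at this
      simpa using this
    rw [hv]; rfl
  have hsurj : Function.Surjective (L : ((Fin n → ℂ) × ℂ) →ₗ[ℂ] ((Fin n → ℂ) × ℂ)) :=
    LinearMap.injective_iff_surjective.1 hinj
  have hmap := hS.map_nhds_eq_of_surj (LinearMap.range_eq_top.2 hsurj)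
  have h00 : bPhi A (x0, 0) = (0, 0) := by
    unfold bPhi
    ext j
    · simp only [bM_zero, hx0eq]; simp
    · rfl
  rw [h00] at hmap
  have hr : Set.range (bPhi A) ∈ nhds ((0, 0) : (Fin n → ℂ) × ℂ) := by
    rw [← hmap]; exact Filter.range_mem_map
  have hcont : Filter.Tendsto (fun t : ℂ => ((0, t) : (Fin n → ℂ) × ℂ)) (nhds 0) (nhds (0, 0)) :=
    Continuous.tendsto' (by fun_prop) _ _ rfl
  filter_upwards [hcont hr] with t ht
  obtain ⟨⟨x, t'⟩, h⟩ := ht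
  have h2 : t' = t := congrArg Prod.snd h
  subst h2
  exact ⟨x, fun j => congrFun (congrArg Prod.fst h) j⟩

end

/-- **Ballantine's theorem.** If all leading principal minors of a complex
`n × n` matrix `A` (`n ≥ 1`) are nonzero, then there exists a complex diagonal
matrix `D` such that all eigenvalues of `D * A` are real, positive and simple. -/
theorem ballantine {n : ℕ} (hn : 1 ≤ n) (A : Matrix (Fin n) (Fin n) ℂ)
    (hminors : ∀ k : Fin n,
      (A.submatrix (Fin.castLE k.isLt) (Fin.castLE k.isLt)).det ≠ 0) :
    ∃ d : Fin n → ℂ,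
      ∃ μ : Fin n → ℝ, Function.Injective μ ∧ (∀ i, 0 < μ i) ∧
        (Matrix.diagonal d * A).charpoly = ∏ i, (X - C ((μ i : ℂ))) := by
  have hev := exists_sol A (bQ_ne A hminors)
  obtain ⟨ε, hε, hball⟩ := Metric.eventually_nhds_iff.1 hev
  set t : ℝ := min (ε / 2) (1 / 2) with ht
  have ht0 : 0 < t := by positivity
  have ht1 : t < 1 := lt_of_le_of_lt (min_le_right _ _) (by norm_num)
  have htε : t < ε := lt_of_le_of_lt (min_le_left _ _) (by linarith)
  obtain ⟨x, hx⟩ := hball (y := (t : ℂ)) (by simpa [abs_of_pos ht0] using htε)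
  have hinj : Function.Injective (fun i : Fin n => t ^ i.val) := fun i j h =>
    Fin.ext (pow_right_injective₀ ht0 ht1.ne h)
  refine ⟨fun i => (t : ℂ) ^ i.val * x i, fun i => t ^ i.val, hinj, fun i => by positivity, ?_⟩
  set M := Matrix.diagonal (fun i : Fin n => (t : ℂ) ^ i.val * x i) * A with hM
  have hroot : ∀ j : Fin n, M.charpoly.IsRoot (((t ^ j.val : ℝ)) : ℂ) := by
    intro j
    rw [Polynomial.IsRoot, Matrix.eval_charpoly]
    have : Matrix.scalar (Fin n) (((t ^ j.val : ℝ)) : ℂ) - M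
        = Matrix.diagonal (fun i : Fin n => (t : ℂ) ^ (min i.val j.val)) * bM A j x t := by
      ext i k
      have e1 : (t : ℂ) ^ (min i.val j.val) * (t : ℂ) ^ (j.val - i.val) = (t : ℂ) ^ j.val := by
        rw [← pow_add]; congr 1; omega
      have e2 : (t : ℂ) ^ (min i.val j.val) * (t : ℂ) ^ (i.val - j.val) = (t : ℂ) ^ i.val := by
        rw [← pow_add]; congr 1; omega
      rw [Matrix.diagonal_mul, Matrix.sub_apply, hM, Matrix.diagonal_mul]
      simp only [bM, Matrix.of_apply, mul_sub, ← mul_assoc, e1, e2]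
      simp [Matrix.scalar_apply, Matrix.diagonal_apply, Matrix.one_apply]
    rw [this, Matrix.det_mul, hx j, mul_zero]
  have hinj' : Function.Injective (fun i : Fin n => (((t ^ i.val : ℝ)) : ℂ)) :=
    Complex.ofReal_injective.comp hinj
  have hdvd : (∏ i : Fin n, (X - C (((t ^ i.val : ℝ)) : ℂ))) ∣ M.charpoly :=
    Finset.prod_dvd_of_coprime
      (fun i _ j _ hij => Polynomial.pairwise_coprime_X_sub_C hinj' hij)
      (fun i _ => Polynomial.dvd_iff_isRoot.2 (hroot i))
  refine Polynomial.eq_of_monic_of_dvd_of_natDegree_le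
    (Polynomial.monic_prod_of_monic _ _ fun i _ => Polynomial.monic_X_sub_C _)
    (Matrix.charpoly_monic M) hdvd ?_
  rw [Matrix.charpoly_natDegree_eq_dim, Polynomial.natDegree_finsetProd_X_sub_C_eq_card]
  simp
end

section
/- Let A be an n×n complex matrix all of whose principal minors (over all nonempty index subsets) are nonzero. Then for any prescribed multiset λ = {λ_1, …, λ_n} of n complex numbers there exists an n×n complex diagonal matrix D such that the spectrum of A·D (counted with algebraic multiplicity) is exactly {λ_1, …, λ_n}, i.e., the characteristic polynomial of A·D equals ∏_{i=1}^n (x − λ_i). -/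
open Matrix Polynomial

lemma fr_nil {F : Type*} [Field F] {n : ℕ} (B : Matrix (Fin n) (Fin n) F)
    (hB : ∀ S : Finset (Fin n), S.Nonempty →
      (B.submatrix (fun i : S => (i : Fin n)) (fun i : S => (i : Fin n))).det ≠ 0)
    (d : Fin n → F) (m : Fin n) (hm : d m ≠ 0) (k : ℕ) :
    (B * Matrix.diagonal d) ^ k ≠ 0 := by
  classical
  set S : Finset (Fin n) := Finset.univ.filter (fun i => d i ≠ 0) with hS
  set N := B * Matrix.diagonal d with hN
  set e : S → Fin n := fun i => (i : Fin n) with he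
  have hcol : ∀ i j, j ∉ S → N i j = 0 := by
    intro i j hj
    have : d j = 0 := by simpa [hS] using hj
    simp [hN, Matrix.mul_diagonal, this]
  have hpow : ∀ k : ℕ, (N ^ k).submatrix e e = (N.submatrix e e) ^ k := by
    intro k
    induction k with
    | zero =>
      rw [pow_zero, pow_zero]
      exact Matrix.submatrix_one _ Subtype.val_injective
    | succ k ih =>
      rw [pow_succ', pow_succ', ← ih]
      ext i j
      simp only [Matrix.submatrix_apply, Matrix.mul_apply]
      rw [he]
      rw [← Finset.sum_coe_sort S (fun x => N (i : Fin n) x * (N ^ k) x (j : Fin n)) |>.symm]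
      symm
      apply Finset.sum_subset (Finset.subset_univ S)
      intro x _ hx
      rw [hcol _ _ hx, zero_mul]
  have hdet : (N.submatrix e e).det ≠ 0 := by
    have : N.submatrix e e = B.submatrix e e * Matrix.diagonal (fun i : S => d i) := by
      ext i j
      simp [hN, Matrix.mul_diagonal, he]
    rw [this, Matrix.det_mul, Matrix.det_diagonal]
    refine mul_ne_zero (hB S ⟨m, by simp [hS, hm]⟩) ?_
    refine Finset.prod_ne_zero_iff.2 ?_
    intro i _
    exact (Finset.mem_filter.1 i.2).2
  intro h0
  have h1 := hpow k
  rw [h0] at h1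
  have h2 : ((N.submatrix e e) ^ k).det = 0 := by
    rw [← h1]
    have : Nonempty S := ⟨⟨m, by simp [hS, hm]⟩⟩
    exact Matrix.det_zero
  rw [Matrix.det_pow] at h2
  exact hdet (eq_zero_of_pow_eq_zero h2)

/-- the key step over a local domain -/
lemma fr_local {V K : Type*} [CommRing V] [IsLocalRing V] [Field K] [Algebra V K]
    (hinj : Function.Injective (algebraMap V K)) {n : ℕ}
    (B : Matrix (Fin n) (Fin n) V)
    (hB : ∀ S : Finset (Fin n), S.Nonempty →
      IsUnit (B.submatrix (fun i : S => (i : Fin n)) (fun i : S => (i : Fin n))).det)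
    (x : Fin n → K) (y : Fin n → V) (u : V) (hu : u ∈ IsLocalRing.maximalIdeal V)
    (hy : ∀ i, algebraMap V K (y i) = algebraMap V K u * x i) (m : Fin n) (hm : IsUnit (y m))
    (hp : ∀ k : Fin n, ∃ v : V, algebraMap V K v =
      (B.map (algebraMap V K) * Matrix.diagonal x).charpoly.coeff k) : False := by
  classical
  choose p hp using hp
  set φ := algebraMap V K with hφ
  set M := B.map φ * Matrix.diagonal x with hM
  set N := B * Matrix.diagonal y with hN
  have hNM : φ.mapMatrix N = φ u • M := by
    ext i j
    simp [hN, hM, Matrix.mul_diagonal, hy]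
    ring
  have hCH : M ^ n + ∑ k : Fin n, φ (p k) • M ^ (k : ℕ) = 0 := by
    have h := Matrix.aeval_self_charpoly M
    rw [Polynomial.aeval_eq_sum_range, Matrix.charpoly_natDegree_eq_dim, Fintype.card_fin,
      Finset.sum_range_succ] at h
    have h1 : M.charpoly.coeff n = 1 := by
      have := Matrix.charpoly_monic M
      rw [Polynomial.Monic, Polynomial.leadingCoeff, Matrix.charpoly_natDegree_eq_dim,
        Fintype.card_fin] at this
      exact this
    rw [h1, one_smul, Finset.sum_range, add_comm] at h
    simpa [hp] using h
  have hV : N ^ n + ∑ k : Fin n, (p k * u ^ (n - k)) • N ^ (k : ℕ) = 0 := by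
    have hi : Function.Injective (φ.mapMatrix (m := Fin n)) := fun a b h => by
      ext i j
      exact hinj (by simpa using congrFun (congrFun h i) j)
    apply hi
    have hs : ∀ (c : V) (Z : Matrix (Fin n) (Fin n) V),
        φ.mapMatrix (c • Z) = φ c • φ.mapMatrix Z := by
      intro c Z; ext i j; simp
    rw [map_zero, map_add, map_sum, map_pow, hNM]
    simp only [hs, map_pow, hNM]
    rw [← smul_zero (φ u ^ n), ← hCH, smul_add, Finset.smul_sum, _root_.smul_pow]
    congr 1
    refine Finset.sum_congr rfl fun k _ => ?_
    rw [_root_.smul_pow, smul_smul, smul_smul, map_mul, map_pow]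
    congr 1
    rw [mul_assoc, ← pow_add, Nat.sub_add_cancel k.2.le, mul_comm]
  set ρ := IsLocalRing.residue V with hρ
  have hs : ∀ (c : V) (Z : Matrix (Fin n) (Fin n) V),
      ρ.mapMatrix (c • Z) = ρ c • ρ.mapMatrix Z := by
    intro c Z; ext i j; simp
  have hκ := congrArg ρ.mapMatrix hV
  have hu0 : ρ u = 0 := (IsLocalRing.residue_eq_zero_iff u).2 hu
  rw [map_zero, map_add, map_sum, map_pow, Finset.sum_eq_zero, add_zero] at hκ
  · refine fr_nil (B.map ρ) ?_ (fun i => ρ (y i)) m (hm.map ρ).ne_zero n ?_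
    · intro S hS
      have := ((hB S hS).map ρ).ne_zero
      rw [RingHom.map_det] at this
      exact this
    · rw [← hκ]
      congr 1
      ext i j
      simp [hN, Matrix.mul_diagonal]
  · intro k _
    rw [hs, map_mul, map_pow, hu0, zero_pow (by have := k.2; omega), mul_zero, zero_smul]

noncomputable def frMat {n : ℕ} (A : Matrix (Fin n) (Fin n) ℂ) :
    Matrix (Fin n) (Fin n) (MvPolynomial (Fin n) ℂ) :=
  A.map (algebraMap ℂ _) * Matrix.diagonal MvPolynomial.X

noncomputable def frF {n : ℕ} (A : Matrix (Fin n) (Fin n) ℂ) (k : Fin n) :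
    MvPolynomial (Fin n) ℂ := (frMat A).charpoly.coeff k

lemma fr_val {n : ℕ} (A : Matrix (Fin n) (Fin n) ℂ)
    (hminors : ∀ S : Finset (Fin n), S.Nonempty →
      (A.submatrix (fun i : S => (i : Fin n)) (fun i : S => (i : Fin n))).det ≠ 0)
    {K : Type*} [Field K] [Algebra (MvPolynomial (Fin n) ℂ) K]
    (V : ValuationSubring K)
    (hC : ∀ c : ℂ, algebraMap (MvPolynomial (Fin n) ℂ) K (MvPolynomial.C c) ∈ V)
    (hF : ∀ k, algebraMap (MvPolynomial (Fin n) ℂ) K (frF A k) ∈ V) (i : Fin n) :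
    algebraMap (MvPolynomial (Fin n) ℂ) K (MvPolynomial.X i) ∈ V := by
  classical
  by_contra hi
  set x : Fin n → K := fun i => algebraMap (MvPolynomial (Fin n) ℂ) K (MvPolynomial.X i) with hx
  obtain ⟨m, -, hmax⟩ := Finset.exists_max_image Finset.univ (fun j => V.valuation (x j))
    ⟨i, Finset.mem_univ i⟩
  have h1 : 1 < V.valuation (x m) := by
    refine lt_of_lt_of_le ?_ (hmax i (Finset.mem_univ i))
    rw [← not_le, V.valuation_le_one_iff]
    exact hi
  have hm0 : x m ≠ 0 := by
    intro h; rw [h, map_zero] at h1; exact absurd h1 (by simp)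
  have hu : (x m)⁻¹ ∈ V := by
    rw [← V.valuation_le_one_iff, map_inv₀]
    exact inv_le_one_of_one_le₀ h1.le
  have hy : ∀ j, (x m)⁻¹ * x j ∈ V := by
    intro j
    rw [← V.valuation_le_one_iff, map_mul, map_inv₀]
    exact inv_mul_le_one_of_le₀ (hmax j (Finset.mem_univ j)) zero_le
  let ι : ℂ →+* V := ((algebraMap (MvPolynomial (Fin n) ℂ) K).comp MvPolynomial.C).codRestrict V hC
  refine fr_local (V := V) (K := K) Subtype.val_injective (A.map ι) ?_ x
    (fun j => ⟨_, hy j⟩) ⟨_, hu⟩ ?_ (fun j => rfl) m ?_ ?_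
  · intro S hS
    have := (IsUnit.mk0 _ (hminors S hS)).map ι
    rw [RingHom.map_det] at this
    exact this
  · rw [V.valuation_lt_one_iff]
    show V.valuation (x m)⁻¹ < 1
    rw [map_inv₀]
    exact inv_lt_one_of_one_lt₀ h1
  · have : (⟨_, hy m⟩ : V) = 1 := Subtype.ext (inv_mul_cancel₀ hm0)
    rw [this]; exact isUnit_one
  · intro k
    refine ⟨⟨_, hF k⟩, ?_⟩
    show algebraMap (MvPolynomial (Fin n) ℂ) K (frF A k) = _
    rw [frF, ← Polynomial.coeff_map, ← Matrix.charpoly_map]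
    congr 2
    ext i j
    simp [frMat, Matrix.mul_diagonal, hx]
    left; rfl

lemma fr_integral {n : ℕ} (A : Matrix (Fin n) (Fin n) ℂ)
    (hminors : ∀ S : Finset (Fin n), S.Nonempty →
      (A.submatrix (fun i : S => (i : Fin n)) (fun i : S => (i : Fin n))).det ≠ 0) :
    Algebra.IsIntegral (Algebra.adjoin ℂ (Set.range (frF A))) (MvPolynomial (Fin n) ℂ) := by
  set R₀ := Algebra.adjoin ℂ (Set.range (frF A)) with hR₀
  set K := FractionRing (MvPolynomial (Fin n) ℂ)
  have hXi : ∀ i, IsIntegral R₀ (MvPolynomial.X i : MvPolynomial (Fin n) ℂ) := by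
    intro i
    rw [← isIntegral_algebraMap_iff (B := K) (IsFractionRing.injective _ _)]
    set x := algebraMap (MvPolynomial (Fin n) ℂ) K (MvPolynomial.X i) with hx
    let g : R₀ →+* K := algebraMap R₀ K
    have h1 : x ∈ (integralClosure (Subring.closure (g.range : Set K)) K).toSubring := by
      rw [← iInf_valuationSubring_superset]
      rw [Subring.mem_iInf]
      rintro ⟨V, hV⟩
      refine fr_val A hminors V ?_ ?_ i
      · intro c
        exact hV ⟨algebraMap ℂ R₀ c, rfl⟩
      · intro k
        exact hV ⟨⟨frF A k, Algebra.subset_adjoin ⟨k, rfl⟩⟩, rfl⟩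
    rw [Subring.closure_eq] at h1
    obtain ⟨p, hp, hpx⟩ : IsIntegral g.range x := h1
    obtain ⟨q, hq, -, hqm⟩ := Polynomial.lifts_and_degree_eq_and_monic
      (Polynomial.mem_lifts p |>.2
        (Polynomial.map_surjective g.rangeRestrict g.rangeRestrict_surjective p)) hp
    refine ⟨q, hqm, ?_⟩
    rw [← hq, Polynomial.eval₂_map] at hpx
    exact hpx
  refine ⟨fun p => ?_⟩
  induction p using MvPolynomial.induction_on with
  | C a => exact isIntegral_algebraMap (R := R₀) (x := algebraMap ℂ R₀ a)
  | add p q hp hq => exact hp.add hq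
  | mul_X p i hp => exact hp.mul (hXi i)

lemma fr_surj {n : ℕ} (A : Matrix (Fin n) (Fin n) ℂ)
    (hminors : ∀ S : Finset (Fin n), S.Nonempty →
      (A.submatrix (fun i : S => (i : Fin n)) (fun i : S => (i : Fin n))).det ≠ 0)
    (c : Fin n → ℂ) : ∃ d : Fin n → ℂ, ∀ k, MvPolynomial.aeval d (frF A k) = c k := by
  have hint := fr_integral A hminors
  have htb : IsTranscendenceBasis ℂ (frF A) := by
    apply Algebra.IsAlgebraic.isTranscendenceBasis_of_le_trdeg_of_finite
    rw [MvPolynomial.trdeg_of_isDomain]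
    simp
  have hai := htb.1
  let ψ : Algebra.adjoin ℂ (Set.range (frF A)) →ₐ[ℂ] ℂ :=
    (MvPolynomial.aeval c).comp hai.aevalEquiv.symm.toAlgHom
  have hψ : Function.Surjective ψ.toRingHom := fun z => ⟨algebraMap ℂ _ z, ψ.commutes z⟩
  have hmax : (RingHom.ker ψ.toRingHom).IsMaximal := RingHom.ker_isMaximal_of_surjective _ hψ
  obtain ⟨Q, hQ, hQc⟩ := Ideal.exists_ideal_over_maximal_of_isIntegral
    (S := MvPolynomial (Fin n) ℂ) (RingHom.ker ψ.toRingHom) (by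
      intro a ha
      have : a = 0 := Subtype.ext ha
      rw [this]; exact Ideal.zero_mem _)
  obtain ⟨d, hd⟩ := MvPolynomial.isMaximal_iff_eq_vanishingIdeal_singleton.1 hQ
  refine ⟨d, fun k => ?_⟩
  let fk : Algebra.adjoin ℂ (Set.range (frF A)) := ⟨frF A k, Algebra.subset_adjoin ⟨k, rfl⟩⟩
  have hfk : ψ fk = c k := by
    have : hai.aevalEquiv (MvPolynomial.X k) = fk := by
      apply Subtype.ext
      simp [fk]
    show MvPolynomial.aeval c (hai.aevalEquiv.symm fk) = c k
    rw [← this, AlgEquiv.symm_apply_apply, MvPolynomial.aeval_X]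
  have hmem : fk - algebraMap ℂ _ (c k) ∈ RingHom.ker ψ.toRingHom := by
    rw [RingHom.mem_ker]
    show ψ (fk - algebraMap ℂ _ (c k)) = 0
    rw [map_sub, hfk, ψ.commutes]
    simp
  rw [← hQc, Ideal.mem_comap, hd, MvPolynomial.mem_vanishingIdeal_singleton_iff] at hmem
  have h2 : MvPolynomial.aeval d (frF A k - MvPolynomial.C (c k)) = 0 := hmem
  rw [map_sub, MvPolynomial.aeval_C] at h2
  simpa [sub_eq_zero] using h2

/-- **Friedland's inverse eigenvalue theorem (existence part).** Let `A` be an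
`n × n` complex matrix all of whose principal minors (over all nonempty index
subsets) are nonzero. Then for any prescribed family `λ_1, …, λ_n` of complex
numbers there exists a complex diagonal matrix `D` such that the spectrum of
`A * D`, counted with algebraic multiplicity, is exactly `{λ_1, …, λ_n}`, i.e.
the characteristic polynomial of `A * D` equals `∏ i, (X - λ i)`. -/
theorem friedland_inverse_eigenvalue {n : ℕ} (A : Matrix (Fin n) (Fin n) ℂ)
    (hminors : ∀ S : Finset (Fin n), S.Nonempty →
      (A.submatrix (fun i : S => (i : Fin n)) (fun i : S => (i : Fin n))).det ≠ 0)
    (lam : Fin n → ℂ) :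
    ∃ d : Fin n → ℂ,
      (A * Matrix.diagonal d).charpoly = ∏ i, (X - C (lam i)) := by
  obtain ⟨d, hd⟩ := fr_surj A hminors (fun k => (∏ i, (X - C (lam i))).coeff k)
  refine ⟨d, ?_⟩
  have hm : (∏ i, (X - C (lam i))).Monic := Polynomial.monic_prod_of_monic _ _
    fun i _ => Polynomial.monic_X_sub_C _
  have hdeg : (∏ i, (X - C (lam i))).natDegree = n := by
    rw [Polynomial.natDegree_prod_of_monic _ _ fun i _ => Polynomial.monic_X_sub_C _]
    simp
  have hm' := Matrix.charpoly_monic (A * Matrix.diagonal d)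
  have hdeg' : (A * Matrix.diagonal d).charpoly.natDegree = n := by
    rw [Matrix.charpoly_natDegree_eq_dim, Fintype.card_fin]
  have hmap : (frMat A).map (MvPolynomial.aeval d).toRingHom = A * Matrix.diagonal d := by
    ext i j
    simp [frMat, Matrix.mul_diagonal]
  ext k
  rcases lt_trichotomy k n with h | h | h
  · have := hd ⟨k, h⟩
    rw [← hmap, Matrix.charpoly_map, Polynomial.coeff_map]
    exact this
  · have e1 := hm.coeff_natDegree
    have e2 := hm'.coeff_natDegree
    rw [hdeg] at e1
    rw [hdeg'] at e2
    rw [h, e1, e2]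
  · rw [Polynomial.coeff_eq_zero_of_natDegree_lt (by omega),
      Polynomial.coeff_eq_zero_of_natDegree_lt (by omega)]
end

section
/- Let A be an n×n complex matrix all of whose principal minors (over all nonempty index subsets) are real and all of whose leading principal minors are positive. Then there exists an n×n real diagonal matrix D with positive diagonal entries such that all eigenvalues of D·A are real, positive and simple. -/
open Matrix Polynomial

theorem hrm_perturb {n : ℕ} (f : ℝ → ℝ → ℝ) (hc : ∀ x, Continuous (fun ε => f ε x))
    (hcx : ∀ ε, Continuous (f ε)) (r : Fin n → ℝ) (hr : Function.Injective r)
    (h0 : ∀ x, f 0 x = ∏ i, (x - r i)) :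
    ∃ ε : ℝ, 0 < ε ∧ ∃ ν : Fin n → ℝ, Function.Injective ν ∧
      (∀ i j, i ≠ j → |ν i - r i| < |r i - r j|) ∧ ∀ i, f ε (ν i) = 0 := by
  obtain ⟨δ, hδgap, hδ⟩ : ∃ δ : ℝ, (∀ i j, i ≠ j → 2 * δ < |r i - r j|) ∧ 0 < δ := by
    have h1 : ∀ᶠ δ : ℝ in nhdsWithin 0 (Set.Ioi 0), ∀ i j, i ≠ j → 2 * δ < |r i - r j| := by
      rw [Filter.eventually_all]; intro i
      rw [Filter.eventually_all]; intro j
      by_cases hij : i = j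
      · simp [hij]
      · have hpos : 0 < |r i - r j| := abs_pos.2 (sub_ne_zero.2 (fun h => hij (hr h)))
        have : Continuous (fun δ : ℝ => 2 * δ) := by fun_prop
        have h2 := (this.tendsto 0).eventually_lt_const (u := |r i - r j|)
          (by rw [mul_zero]; exact hpos)
        filter_upwards [nhdsWithin_le_nhds h2] with δ hδ _ using hδ
    exact (h1.and self_mem_nhdsWithin).exists
  have hneg : ∀ i, f 0 (r i - δ) * f 0 (r i + δ) < 0 := by
    intro i
    rw [h0, h0, ← Finset.prod_mul_distrib, ← Finset.mul_prod_erase _ _ (Finset.mem_univ i)]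
    apply mul_neg_of_neg_of_pos
    · nlinarith
    · apply Finset.prod_pos
      intro j hj
      have hij : i ≠ j := fun h => (Finset.ne_of_mem_erase hj) h.symm
      have h1 := hδgap i j hij
      have h2 : |δ| < |r i - r j| := by rw [abs_of_pos hδ]; linarith
      have h3 := sq_lt_sq.2 h2
      nlinarith
  obtain ⟨ε, hεneg, hε⟩ : ∃ ε : ℝ, (∀ i, f ε (r i - δ) * f ε (r i + δ) < 0) ∧ 0 < ε := by
    have h1 : ∀ᶠ ε : ℝ in nhdsWithin 0 (Set.Ioi 0), ∀ i, f ε (r i - δ) * f ε (r i + δ) < 0 := by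
      rw [Filter.eventually_all]; intro i
      have hcc : Continuous (fun ε => f ε (r i - δ) * f ε (r i + δ)) := (hc _).mul (hc _)
      exact nhdsWithin_le_nhds ((hcc.tendsto 0).eventually (gt_mem_nhds (hneg i)))
    exact (h1.and self_mem_nhdsWithin).exists
  have hroot : ∀ i, ∃ x, |x - r i| ≤ δ ∧ f ε x = 0 := by
    intro i
    have hle : r i - δ ≤ r i + δ := by linarith
    rcases mul_neg_iff.1 (hεneg i) with ⟨ha, hb⟩ | ⟨ha, hb⟩
    · obtain ⟨x, hx, hx0⟩ := intermediate_value_Icc' hle (hcx ε).continuousOn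
        (show (0:ℝ) ∈ _ from ⟨hb.le, ha.le⟩)
      exact ⟨x, abs_le.2 ⟨by linarith [hx.1], by linarith [hx.2]⟩, hx0⟩
    · obtain ⟨x, hx, hx0⟩ := intermediate_value_Icc hle (hcx ε).continuousOn
        (show (0:ℝ) ∈ _ from ⟨ha.le, hb.le⟩)
      exact ⟨x, abs_le.2 ⟨by linarith [hx.1], by linarith [hx.2]⟩, hx0⟩
  choose ν hν hν0 using hroot
  refine ⟨ε, hε, ν, ?_, ?_, hν0⟩
  · intro i j hij
    by_contra hne
    have h1 := hδgap i j hne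
    have h2 := abs_sub_le (r i) (ν i) (r j)
    have h3 := hν i
    have h4 := hν j
    rw [abs_sub_comm] at h3
    rw [← hij] at h4
    linarith
  · intro i j hij
    linarith [hδgap i j hij, hν i]

theorem hrm_real {n : ℕ} (A : Matrix (Fin n) (Fin n) ℂ)
    (hreal : ∀ S : Finset (Fin n), S.Nonempty →
      (A.submatrix (fun i : S => (i : Fin n)) (fun i : S => (i : Fin n))).det.im = 0)
    (d : Fin n → ℝ) (x : ℝ) :
    ((Matrix.diagonal (fun i => (d i : ℂ)) * A).charpoly.eval (x : ℂ)).im = 0 := by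
  set M := Matrix.diagonal (fun i => (d i : ℂ)) * A with hM
  have hmin : ∀ S : Finset (Fin n),
      (M.submatrix (Subtype.val : S → Fin n) (Subtype.val : S → Fin n)).det ∈ 
        Complex.ofRealHom.range := by
    intro S
    have h1 : M.submatrix (Subtype.val : S → Fin n) (Subtype.val : S → Fin n) =
        Matrix.diagonal (fun i : S => (d i : ℂ)) *
          A.submatrix (Subtype.val : S → Fin n) (Subtype.val : S → Fin n) := by
      ext i j
      simp [hM, Matrix.diagonal_mul]
    rw [h1, Matrix.det_mul, Matrix.det_diagonal]
    refine mul_mem (prod_mem fun i _ => ⟨d i, rfl⟩) ?_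
    rcases S.eq_empty_or_nonempty with rfl | hS
    · rw [Matrix.det_isEmpty]; exact one_mem _
    · exact ⟨(A.submatrix (Subtype.val : S → Fin n) (Subtype.val : S → Fin n)).det.re,
        Complex.ext (by simp) (by simpa using (hreal S hS).symm)⟩
  have hmem : M.charpoly.eval (x : ℂ) ∈ Complex.ofRealHom.range := by
    rw [Polynomial.eval_eq_sum_range]
    refine sum_mem fun k hk => mul_mem ?_ (pow_mem (show (x : ℂ) ∈ Complex.ofRealHom.range from ⟨x, rfl⟩) _)
    rw [Finset.mem_range, Matrix.charpoly_natDegree_eq_dim] at hk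
    have h2 := M.charpoly_coeff_eq_sum_minors (Fintype.card (Fin n) - k) (by omega)
    rw [show Fintype.card (Fin n) - (Fintype.card (Fin n) - k) = k by omega] at h2
    rw [h2]
    exact mul_mem (pow_mem (neg_mem (one_mem _)) _) (sum_mem fun s _ => hmin s)
  obtain ⟨y, hy⟩ := hmem
  rw [← hy]; simp

theorem hrm_zero {n : ℕ} (A : Matrix (Fin (n+1)) (Fin (n+1)) ℂ) (d : Fin n → ℝ) (x : ℂ) :
    (Matrix.diagonal (fun i => ((Fin.snoc d 0 : Fin (n+1) → ℝ) i : ℂ)) * A).charpoly.eval x =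
      x * (Matrix.diagonal (fun i => (d i : ℂ)) *
        A.submatrix Fin.castSucc Fin.castSucc).charpoly.eval x := by
  rw [Matrix.eval_charpoly, Matrix.eval_charpoly, Matrix.det_succ_row _ (Fin.last n),
    Finset.sum_eq_single (Fin.last n)]
  · congr 1
    · simp [Matrix.diagonal_mul, ← two_mul]
    · congr 1
      ext i j
      simp [Matrix.diagonal_mul, Matrix.diagonal_apply, Fin.succAbove_last]
  · intro j _ hj
    simp [Matrix.diagonal_mul, Matrix.diagonal_apply, hj.symm]
  · simp

theorem hershkowitz_real_minors {n : ℕ} (A : Matrix (Fin n) (Fin n) ℂ)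
    (hreal : ∀ S : Finset (Fin n), S.Nonempty →
      (A.submatrix (fun i : S => (i : Fin n)) (fun i : S => (i : Fin n))).det.im = 0)
    (hleading : ∀ k : Fin n,
      0 < (A.submatrix (Fin.castLE k.isLt) (Fin.castLE k.isLt)).det.re) :
    ∃ d : Fin n → ℝ, (∀ i, 0 < d i) ∧
      ∃ μ : Fin n → ℝ, Function.Injective μ ∧ (∀ i, 0 < μ i) ∧
        (Matrix.diagonal (fun i => (d i : ℂ)) * A).charpoly = ∏ i, (X - C ((μ i : ℂ))) := by
  induction n with
  | zero =>
    refine ⟨fun _ => 1, fun _ => one_pos, fun _ => 1, fun i => i.elim0, fun _ => one_pos, ?_⟩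
    simp [Matrix.charpoly]
  | succ n ih =>
    obtain ⟨d, hd, μ, hμi, hμ, hchar⟩ := ih (A.submatrix Fin.castSucc Fin.castSucc)
      (by
        intro S hS
        have h := hreal (S.map Fin.castSuccEmb) (hS.map)
        let e : S ≃ (S.map Fin.castSuccEmb : Finset (Fin (n+1))) :=
          Equiv.ofBijective (fun i => ⟨Fin.castSucc i.1, by simp⟩) (by
            constructor
            · intro i j hij
              exact Subtype.ext (Fin.castSucc_injective n (congrArg Subtype.val hij))
            · rintro ⟨j, hj⟩
              obtain ⟨i, hi, rfl⟩ := Finset.mem_map.1 hj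
              exact ⟨⟨i, hi⟩, rfl⟩)
        rw [← Matrix.det_submatrix_equiv_self e] at h
        exact h)
      (fun k => hleading k.castSucc)
    let D : ℝ → Fin (n+1) → ℝ := fun ε => Fin.snoc d ε
    let M : ℝ → Matrix (Fin (n+1)) (Fin (n+1)) ℂ :=
      fun ε => Matrix.diagonal (fun i => (D ε i : ℂ)) * A
    let r : Fin (n+1) → ℝ := Fin.snoc μ 0
    have hDc : ∀ i, Continuous (fun ε => D ε i) := by
      intro i
      refine Fin.lastCases ?_ (fun j => ?_) i
      · simp only [D, Fin.snoc_last]; exact continuous_id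
      · simp only [D, Fin.snoc_castSucc]; exact continuous_const
    obtain ⟨ε, hε, ν, hνi, hνr, hν0⟩ := hrm_perturb
      (fun ε x => ((M ε).charpoly.eval (x : ℂ)).re)
      (by
        intro x
        simp only [Matrix.eval_charpoly]
        refine Complex.continuous_re.comp (Continuous.matrix_det ?_)
        refine continuous_const.sub (Continuous.matrix_mul (Continuous.matrix_diagonal ?_)
          continuous_const)
        exact continuous_pi fun i => Complex.continuous_ofReal.comp (hDc i))
      (by
        intro ε
        exact Complex.continuous_re.comp ((M ε).charpoly.continuous.comp Complex.continuous_ofReal))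
      r
      (by
        intro i j
        refine Fin.lastCases ?_ (fun i => ?_) i <;> refine Fin.lastCases ?_ (fun j => ?_) j
        · simp
        · simp [r, (hμ j).ne]
        · simp [r, (hμ i).ne']
        · simp only [r, Fin.snoc_castSucc]
          intro h; rw [hμi h])
      (by
        intro x
        have h1 : (M 0).charpoly.eval (x : ℂ) = ((∏ i, (x - r i) : ℝ) : ℂ) := by
          simp only [M, D]
          rw [hrm_zero, hchar, Polynomial.eval_prod, Fin.prod_univ_castSucc]
          simp [r, mul_comm]
        simp only [h1, Complex.ofReal_re])
    have hDpos : ∀ i, 0 < D ε i := by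
      intro i
      refine Fin.lastCases ?_ (fun j => ?_) i
      · simpa [D] using hε
      · simpa [D] using hd j
    have hνpos : ∀ i : Fin n, 0 < ν i.castSucc := by
      intro i
      have h := hνr i.castSucc (Fin.last n) (Fin.castSucc_lt_last i).ne
      simp only [r, Fin.snoc_castSucc, Fin.snoc_last, sub_zero, abs_of_pos (hμ i)] at h
      linarith [(abs_lt.1 h).1]
    have hcharν : (M ε).charpoly = ∏ i, (X - C ((ν i : ℂ))) := by
      refine eq_of_monic_of_dvd_of_natDegree_le (monic_prod_of_monic _ _ fun i _ => monic_X_sub_C _)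
        (M ε).charpoly_monic ?_ ?_
      · refine Finset.prod_dvd_of_coprime ?_ ?_
        · intro i _ j _ hij
          exact pairwise_coprime_X_sub_C (s := fun i => (ν i : ℂ))
            (Complex.ofReal_injective.comp hνi) hij
        · intro i _
          rw [dvd_iff_isRoot]
          exact Complex.ext (hν0 i) (hrm_real A hreal _ _)
      · rw [Matrix.charpoly_natDegree_eq_dim, natDegree_prod_of_monic _ _ fun i _ => monic_X_sub_C _]
        simp
    have hdet : (M ε).det = ((∏ i, ν i : ℝ) : ℂ) := by
      rw [Matrix.det_eq_sign_charpoly_coeff, hcharν, coeff_zero_eq_eval_zero, eval_prod]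
      simp [Finset.prod_neg, ← mul_assoc, ← mul_pow]
    have hprod : 0 < ∏ i, ν i := by
      have h1 : ∏ i, ν i = (∏ i, D ε i) * A.det.re := by
        have := congrArg Complex.re hdet
        rw [Complex.ofReal_re] at this
        rw [← this]
        simp only [M, Matrix.det_mul, Matrix.det_diagonal]
        rw [← Complex.ofReal_prod, Complex.re_ofReal_mul]
      rw [h1]
      exact mul_pos (Finset.prod_pos fun i _ => hDpos i) (hleading (Fin.last n))
    have hlast : 0 < ν (Fin.last n) := by
      rw [Fin.prod_univ_castSucc] at hprod
      exact pos_of_mul_pos_right hprod (Finset.prod_nonneg fun i _ => (hνpos i).le)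
    exact ⟨D ε, hDpos, ν, hνi, fun i => Fin.lastCases hlast hνpos i, hcharν⟩
end

section
/- Let G be an m×m real matrix and let G_D denote the diagonal matrix whose diagonal entries are the diagonal entries of G. There exists a real diagonal matrix D such that G·D is Hurwitz together with all of its principal submatrices (i.e., for every proper subset f of {1,…,m}, the principal submatrix (G·D)(f) obtained by deleting the rows and columns indexed by f is Hurwitz) if and only if det(G(f))·det(G_D(f)) > 0 for every proper subset f of {1,…,m}, where M(f) denotes the principal submatrix of M obtained by deleting the rows and columns with indices in f. -/
open Matrix

/-- A real square matrix is Hurwitz if all its (complex) eigenvalues have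
strictly negative real part. -/
def IsHurwitz {n : Type*} [Fintype n] [DecidableEq n] (M : Matrix n n ℝ) : Prop :=
  ∀ μ ∈ spectrum ℂ (M.map (Complex.ofReal)), μ.re < 0

/-- The principal submatrix of `M` obtained by deleting the rows and columns
with indices in `f`. -/
def delSubmatrix {m : ℕ} (M : Matrix (Fin m) (Fin m) ℝ) (f : Finset (Fin m)) :
    Matrix {i : Fin m // i ∉ f} {i : Fin m // i ∉ f} ℝ :=
  M.submatrix Subtype.val Subtype.val

open Matrix Polynomial Filter Topology Bornology in
theorem poly_key (r q : ℂ[X]) (hdeg : q.degree ≤ r.degree)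
    (hr : ∀ z : ℂ, r.eval z = 0 → z.re < 0)
    (h0 : 0 < (q.eval 0 / r.eval 0).re) :
    ∀ᶠ ε : ℝ in 𝓝[>] 0, ∀ z : ℂ, z * r.eval z + (ε : ℂ) * q.eval z = 0 → z.re < 0 := by
  have hne : ∀ z : ℂ, 0 ≤ z.re → r.eval z ≠ 0 := fun z hz h => absurd (hr z h) (not_lt.2 hz)
  -- boundedness
  obtain ⟨C, hCpos, hC⟩ : ∃ C : ℝ, 0 < C ∧ ∀ z : ℂ, 0 ≤ z.re → ‖q.eval z / r.eval z‖ ≤ C := by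
    obtain ⟨c, hc⟩ := (Polynomial.isBigO_cobounded_of_degree_le hdeg).bound
    rw [← comap_norm_atTop, Filter.eventually_comap] at hc
    obtain ⟨R, hR⟩ := Filter.eventually_atTop.1 hc
    have hcomp : IsCompact (Metric.closedBall (0 : ℂ) R ∩ {z : ℂ | 0 ≤ z.re}) :=
      (isCompact_closedBall _ _).inter_right (isClosed_le continuous_const Complex.continuous_re)
    have hcont : ContinuousOn (fun z : ℂ => q.eval z / r.eval z)
        (Metric.closedBall (0 : ℂ) R ∩ {z : ℂ | 0 ≤ z.re}) :=
      q.continuous.continuousOn.div r.continuous.continuousOn (fun z hz => hne z hz.2)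
    obtain ⟨C, hC⟩ := hcomp.exists_bound_of_continuousOn hcont
    refine ⟨max (max C c) 1, by positivity, fun z hz => ?_⟩
    by_cases hzR : ‖z‖ ≤ R
    · exact (hC z ⟨by simpa using hzR, hz⟩).trans ((le_max_left _ _).trans (le_max_left _ _))
    · have h1 := hR ‖z‖ (not_le.1 hzR).le z rfl
      rw [norm_div, div_le_iff₀ (norm_pos_iff.2 (hne z hz))]
      refine h1.trans ?_
      gcongr
      exact (le_max_right _ _).trans (le_max_left _ _)
  -- near zero
  have hr0 : r.eval 0 ≠ 0 := hne 0 (by simp)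
  have hcont0 : ContinuousAt (fun z : ℂ => (q.eval z / r.eval z).re) 0 :=
    Complex.continuous_re.continuousAt.comp
      (q.continuous.continuousAt.div r.continuous.continuousAt hr0)
  obtain ⟨δ, hδ, hball⟩ := Metric.eventually_nhds_iff.1 (hcont0.eventually (lt_mem_nhds h0))
  filter_upwards [Ioo_mem_nhdsGT (show (0 : ℝ) < δ / C by positivity)] with ε hε z hz
  by_contra hcon
  have hzr : 0 ≤ z.re := not_lt.1 hcon
  have hz' : z = -((ε : ℂ) * (q.eval z / r.eval z)) := by
    have := hne z hzr
    field_simp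
    linear_combination hz
  have hnorm : ‖z‖ < δ := by
    have : ‖z‖ = ε * ‖q.eval z / r.eval z‖ := by
      conv_lhs => rw [hz']
      rw [norm_neg, norm_mul, Complex.norm_real, Real.norm_eq_abs, abs_of_pos hε.1]
    rw [this]
    calc _ ≤ ε * C := mul_le_mul_of_nonneg_left (hC z hzr) hε.1.le
      _ < δ := (lt_div_iff₀ hCpos).1 hε.2
  have h1 := hball (y := z) (by simpa using hnorm)
  have h2 : z.re = -(ε * (q.eval z / r.eval z).re) := by
    conv_lhs => rw [hz']
    rw [Complex.neg_re, Complex.re_ofReal_mul]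
  have := mul_pos hε.1 h1
  linarith

theorem charpoly_col {R n : Type*} [CommRing R] [Fintype n] [DecidableEq n]
    (M : Matrix n n R) (a : n) (ε t : R) :
    (M.updateCol a (fun i => ε * M i a)).charpoly.eval t =
      (1 - ε) * t * (M.submatrix (Subtype.val : {i // i ≠ a} → n) Subtype.val).charpoly.eval t
        + ε * M.charpoly.eval t := by
  simp only [Matrix.eval_charpoly]
  set B := Matrix.scalar n t - M with hB
  have h1 : Matrix.scalar n t - M.updateCol a (fun i => ε * M i a) =
      B.updateCol a (((1 - ε) * t) • Pi.single a 1 + ε • (fun i => B i a)) := by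
    ext i j
    by_cases hj : j = a
    · subst hj
      by_cases hi : i = j
      · subst hi; simp [hB]; ring
      · simp [hB, hi]
    · simp [hB, hj]
  have h2 : (B.updateCol a (Pi.single a 1)).det = (Matrix.scalar {i // i ≠ a} t -
      M.submatrix (Subtype.val : {i // i ≠ a} → n) Subtype.val).det := by
    rw [Matrix.twoBlockTriangular_det' _ (fun i => i ≠ a)]
    · have : Unique {i // ¬ (i ≠ a)} := ⟨⟨⟨a, by simp⟩⟩, fun x => Subtype.ext (by simpa using x.2)⟩
      have e2 : (Matrix.toSquareBlockProp (B.updateCol a (Pi.single a 1)) fun i => ¬ (i ≠ a)).det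
          = 1 := by
        rw [← Matrix.det_one (n := {i // ¬ (i ≠ a)})]
        congr 1
        ext i j
        have hi := not_not.1 i.2
        have hj := not_not.1 j.2
        have hij : i = j := Subtype.ext (hi.trans hj.symm)
        subst hij
        simp [Matrix.toSquareBlockProp_def, hi]
      rw [e2, mul_one]
      congr 1
      ext i j
      simp [Matrix.toSquareBlockProp_def, hB, j.2, Matrix.diagonal_apply, Subtype.ext_iff]
    · intro i hi j hj
      obtain rfl := not_not.1 hj
      simp [hi]
  rw [h1, Matrix.det_updateCol_add, Matrix.det_updateCol_smul, Matrix.det_updateCol_smul, h2,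
    Matrix.updateCol_eq_self]

theorem hurwitz_iff {n : Type*} [Fintype n] [DecidableEq n] (M : Matrix n n ℝ) :
    IsHurwitz M ↔ ∀ z : ℂ, (M.charpoly.map Complex.ofRealHom).eval z = 0 → z.re < 0 := by
  unfold IsHurwitz
  have : M.map Complex.ofReal = M.map Complex.ofRealHom := rfl
  simp only [Matrix.mem_spectrum_iff_isRoot_charpoly, this, Matrix.charpoly_map, Polynomial.IsRoot]

theorem hurwitz_det {n : Type*} [Fintype n] [DecidableEq n] (M : Matrix n n ℝ)
    (h : IsHurwitz M) : 0 < (-M).det := by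
  rw [hurwitz_iff] at h
  have hne : ∀ t : ℝ, 0 ≤ t → M.charpoly.eval t ≠ 0 := by
    intro t ht h0
    have := h t (by
      have : (t : ℂ) = Complex.ofRealHom t := rfl
      rw [this, Polynomial.eval_map_apply, h0, map_zero])
    simp at this
    linarith
  have h0 : M.charpoly.eval 0 = (-M).det := by
    rw [Matrix.eval_charpoly]; simp
  rw [← h0]
  by_contra hcon
  have hneg : M.charpoly.eval 0 < 0 := lt_of_le_of_ne (not_lt.1 hcon) (hne 0 le_rfl)
  have hdeg : 0 < M.charpoly.degree := by
    by_contra hd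
    have := Polynomial.eq_C_of_degree_le_zero (not_lt.1 hd)
    have h1 := M.charpoly_monic
    rw [this, Polynomial.Monic, Polynomial.leadingCoeff_C] at h1
    rw [this, h1] at hneg
    simp at hneg
    linarith
  have ht := M.charpoly.tendsto_atTop_of_leadingCoeff_nonneg hdeg (by rw [M.charpoly_monic]; simp)
  obtain ⟨T, hT, hT0⟩ := ((ht.eventually_gt_atTop 0).and (Filter.eventually_ge_atTop 0)).exists
  obtain ⟨t, ht, ht'⟩ := intermediate_value_Icc hT0 M.charpoly.continuous.continuousOn
    ⟨hneg.le, hT.le⟩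
  exact hne t ht.1 ht'

open Topology in
theorem hurwitz_step {n : Type*} [Fintype n] [DecidableEq n] (M : Matrix n n ℝ) (a : n)
    (h : IsHurwitz (M.submatrix (Subtype.val : {i // i ≠ a} → n) Subtype.val))
    (hM : 0 < (-M).det) :
    ∀ᶠ ε : ℝ in 𝓝[>] 0, IsHurwitz (M.updateCol a (fun i => ε * M i a)) := by
  set M' := M.submatrix (Subtype.val : {i // i ≠ a} → n) Subtype.val with hM'
  have hM'det := hurwitz_det _ h
  rw [hurwitz_iff] at h
  have hXm : (Polynomial.X * M'.charpoly).Monic := Polynomial.monic_X.mul M'.charpoly_monic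
  have hcard : Fintype.card n = Fintype.card {i // i ≠ a} + 1 := by
    have := Fintype.card_pos_iff.2 ⟨a⟩
    simp [Fintype.card_subtype_compl]
    omega
  have hXd : (Polynomial.X * M'.charpoly).natDegree = Fintype.card n := by
    rw [Polynomial.natDegree_X_mul M'.charpoly_monic.ne_zero, Matrix.charpoly_natDegree_eq_dim, hcard]
  have hq : (M.charpoly - Polynomial.X * M'.charpoly).degree ≤ M'.charpoly.degree := by
    have h1 : (M.charpoly - Polynomial.X * M'.charpoly).degree < M.charpoly.degree := by
      apply Polynomial.degree_sub_lt_left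
      · rw [Polynomial.degree_eq_natDegree M.charpoly_monic.ne_zero,
          Polynomial.degree_eq_natDegree hXm.ne_zero, hXd, Matrix.charpoly_natDegree_eq_dim]
      · exact M.charpoly_monic.ne_zero
      · rw [M.charpoly_monic, hXm]
    rw [Matrix.charpoly_degree_eq_dim, hcard] at h1
    rw [Matrix.charpoly_degree_eq_dim]
    rw [Polynomial.degree_lt_iff_coeff_zero] at h1
    rw [Polynomial.degree_le_iff_coeff_zero]
    intro k hk
    exact h1 k (by exact_mod_cast hk)
  have key := poly_key (M'.charpoly.map Complex.ofRealHom)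
    ((M.charpoly - Polynomial.X * M'.charpoly).map Complex.ofRealHom)
    (by simpa only [Polynomial.degree_map] using hq) h (by
      have e0 : (0 : ℂ) = Complex.ofRealHom 0 := by simp
      rw [e0, Polynomial.eval_map_apply, Polynomial.eval_map_apply, ← map_div₀]
      have e1 : M.charpoly.eval 0 = (-M).det := by rw [Matrix.eval_charpoly]; simp
      have e2 : M'.charpoly.eval 0 = (-M').det := by rw [Matrix.eval_charpoly]; simp
      simp only [Polynomial.eval_sub, Polynomial.eval_mul, Polynomial.eval_X, e1, e2, zero_mul,
        sub_zero, Complex.ofRealHom_eq_coe, Complex.ofReal_re]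
      positivity)
  filter_upwards [key] with ε hε
  rw [hurwitz_iff]
  intro z hz
  apply hε
  have e3 : (M.updateCol a (fun i => ε * M i a)).map Complex.ofRealHom =
     (M.map Complex.ofRealHom).updateCol a (fun i => (ε : ℂ) * (M.map Complex.ofRealHom) i a) := by
    ext i j
    by_cases hj : j = a
    · subst hj; simp
    · simp [hj]
  rw [← Matrix.charpoly_map, e3, charpoly_col] at hz
  have e4 : (M.map Complex.ofRealHom).submatrix (Subtype.val : {i // i ≠ a} → n) Subtype.val
    = M'.map Complex.ofRealHom := rfl
  rw [e4, Matrix.charpoly_map, Matrix.charpoly_map] at hz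
  rw [Polynomial.map_sub, Polynomial.map_mul, Polynomial.map_X, Polynomial.eval_sub,
    Polynomial.eval_mul, Polynomial.eval_X]
  linear_combination hz

theorem hurwitz_reindex {n k : Type*} [Fintype n] [DecidableEq n] [Fintype k] [DecidableEq k]
    (e : n ≃ k) (M : Matrix n n ℝ) (h : IsHurwitz M) : IsHurwitz (Matrix.reindex e e M) := by
  rw [hurwitz_iff] at *
  rwa [Matrix.charpoly_reindex]

theorem det_del_mul {m : ℕ} (G : Matrix (Fin m) (Fin m) ℝ) (d : Fin m → ℝ) (f : Finset (Fin m)) :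
    (-(delSubmatrix (G * Matrix.diagonal d) f)).det =
      (delSubmatrix G f).det * ∏ i : {i : Fin m // i ∉ f}, (-d i) := by
  rw [← Matrix.det_diagonal, ← Matrix.det_mul]
  congr 1
  ext i j
  simp [delSubmatrix]

theorem det_del_diag {m : ℕ} (g : Fin m → ℝ) (f : Finset (Fin m)) :
    (delSubmatrix (Matrix.diagonal g) f).det = ∏ i : {i : Fin m // i ∉ f}, g i := by
  rw [← Matrix.det_diagonal]
  congr 1
  ext i j
  simp [delSubmatrix, Matrix.diagonal_apply, Subtype.ext_iff]

open Topology in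
theorem backward {m : ℕ} (G : Matrix (Fin m) (Fin m) ℝ)
    (hG : ∀ f : Finset (Fin m), f ≠ Finset.univ →
        0 < (delSubmatrix G f).det *
          (delSubmatrix (Matrix.diagonal (fun i => G i i)) f).det) (S : Finset (Fin m)) :
    ∃ d : Fin m → ℝ, (∀ i, ∃ c, 0 < c ∧ d i = -(c * G i i)) ∧
      ∀ f : Finset (Fin m), (∀ i, i ∉ f → i ∈ S) →
        IsHurwitz (delSubmatrix (G * Matrix.diagonal d) f) := by
  induction S using Finset.induction_on with
  | empty =>
    refine ⟨fun i => -(G i i), fun i => ⟨1, one_pos, by simp⟩, fun f hf => ?_⟩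
    have : IsEmpty {i // i ∉ f} := ⟨fun x => by simpa using hf x.1 x.2⟩
    rw [hurwitz_iff]
    intro z hz
    rw [← Matrix.charpoly_map, Matrix.eval_charpoly, Matrix.det_isEmpty] at hz
    simp at hz
  | insert a S ha ih =>
    obtain ⟨d, hd, hH⟩ := ih
    have hev : ∀ f : Finset (Fin m), ∀ᶠ ε : ℝ in 𝓝[>] 0, (∀ i, i ∉ f → i ∈ insert a S) →
        IsHurwitz (delSubmatrix (G * Matrix.diagonal (Function.update d a (ε * d a))) f) := by
      intro f
      by_cases hf : ∀ i, i ∉ f → i ∈ insert a S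
      swap
      · exact Filter.Eventually.of_forall fun ε h => absurd h hf
      by_cases haf : a ∈ f
      · refine Filter.Eventually.of_forall fun ε _ => ?_
        have e : delSubmatrix (G * Matrix.diagonal (Function.update d a (ε * d a))) f =
            delSubmatrix (G * Matrix.diagonal d) f := by
          ext i j
          have : (j : Fin m) ≠ a := fun h => j.2 (h ▸ haf)
          simp [delSubmatrix, this]
        rw [e]
        apply hH
        intro i hi
        exact (Finset.mem_insert.1 (hf i hi)).resolve_left (fun h => hi (h ▸ haf))
      · have hsub := hH (insert a f) (by
          intro i hi
          rw [Finset.mem_insert, not_or] at hi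
          exact (Finset.mem_insert.1 (hf i hi.2)).resolve_left hi.1)
        let e : {i : Fin m // i ∉ insert a f} ≃
            {x : {i : Fin m // i ∉ f} // x ≠ ⟨a, haf⟩} :=
          { toFun := fun x => ⟨⟨x.1, fun h => x.2 (Finset.mem_insert_of_mem h)⟩,
              fun h => x.2 (by
                have : x.1 = a := congrArg Subtype.val h
                rw [this]; exact Finset.mem_insert_self _ _)⟩
            invFun := fun x => ⟨x.1.1, fun h => (Finset.mem_insert.1 h).elim
              (fun h => x.2 (Subtype.ext h)) x.1.2⟩
            left_inv := fun x => rfl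
            right_inv := fun x => rfl }
        have h1 := hurwitz_reindex e _ hsub
        have h2 := hurwitz_step (delSubmatrix (G * Matrix.diagonal d) f) ⟨a, haf⟩ h1 (by
          rw [det_del_mul]
          have h3 := hG f (fun h => haf (h ▸ Finset.mem_univ a))
          rw [det_del_diag] at h3
          choose c hc hdc using hd
          have : ∏ i : {i : Fin m // i ∉ f}, (-d i) =
              (∏ i : {i : Fin m // i ∉ f}, c i) * ∏ i : {i : Fin m // i ∉ f}, G i i := by
            rw [← Finset.prod_mul_distrib]
            exact Finset.prod_congr rfl fun i _ => by rw [hdc]; ring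
          rw [this]
          have h4 : 0 < ∏ i : {i : Fin m // i ∉ f}, c i := Finset.prod_pos fun i _ => hc i
          have := mul_pos h4 h3
          linarith)
        filter_upwards [h2] with ε hε _
        convert hε using 1
        ext i j
        by_cases hj : j = ⟨a, haf⟩
        · subst hj
          simp [delSubmatrix]
          ring
        · have : (j : Fin m) ≠ a := fun h => hj (Subtype.ext h)
          simp [delSubmatrix, hj, this]
    obtain ⟨ε, hε, hpos⟩ :=
      ((Filter.eventually_all.2 hev).and (self_mem_nhdsWithin (s := Set.Ioi (0:ℝ)))).exists
    refine ⟨_, fun i => ?_, hε⟩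
    obtain ⟨c, hc, hdc⟩ := hd i
    by_cases hi : i = a
    · subst hi
      exact ⟨ε * c, mul_pos hpos hc, by simp [hdc]; ring⟩
    · exact ⟨c, hc, by simp [hi, hdc]⟩

/-- **Locatelli–Schiavoni.** Given a real `m × m` matrix `G`, there exists a
real diagonal matrix `D` such that `G * D` is Hurwitz together with all of its
principal submatrices if and only if `det (G(f)) * det (G_D(f)) > 0` for every
proper subset `f` of the index set, where `M(f)` denotes the principal
submatrix of `M` obtained by deleting rows and columns indexed by `f` and
`G_D` is the diagonal part of `G`. -/
theorem locatelli_schiavoni {m : ℕ} (G : Matrix (Fin m) (Fin m) ℝ) :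
    (∃ d : Fin m → ℝ, ∀ f : Finset (Fin m), f ≠ Finset.univ →
        IsHurwitz (delSubmatrix (G * Matrix.diagonal d) f)) ↔
    (∀ f : Finset (Fin m), f ≠ Finset.univ →
        0 < (delSubmatrix G f).det *
          (delSubmatrix (Matrix.diagonal (fun i => G i i)) f).det) := by
  constructor
  · rintro ⟨d, hd⟩ f hf
    have h1 : ∀ f : Finset (Fin m), f ≠ Finset.univ →
        0 < (delSubmatrix G f).det * ∏ i : {i : Fin m // i ∉ f}, (-d i) := by
      intro f hf
      rw [← det_del_mul]
      exact hurwitz_det _ (hd f hf)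
    have h2 : ∀ i, 0 < G i i * (-d i) := by
      intro i
      have h3 := h1 ({i}ᶜ) (by
        intro h
        have := Finset.mem_univ i
        rw [← h] at this
        simp at this)
      have hu : Unique {j : Fin m // j ∉ ({i}ᶜ : Finset (Fin m))} :=
        ⟨⟨⟨i, by simp⟩⟩, fun x => Subtype.ext (by simpa using x.2)⟩
      have hval : (default : {j : Fin m // j ∉ ({i}ᶜ : Finset (Fin m))}).1 = i := by
        simpa using (default : {j : Fin m // j ∉ ({i}ᶜ : Finset (Fin m))}).2
      rw [Matrix.det_unique, Fintype.prod_unique] at h3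
      simpa only [delSubmatrix, Matrix.submatrix_apply, hval] using h3
    rw [det_del_diag]
    have h4 := h1 f hf
    have h5 : 0 < (∏ i : {i : Fin m // i ∉ f}, G i i) * ∏ i : {i : Fin m // i ∉ f}, (-d i) := by
      rw [← Finset.prod_mul_distrib]
      exact Finset.prod_pos fun i _ => h2 i
    have h6 := mul_pos h4 h5
    by_contra hcon
    have h7 := mul_nonneg (neg_nonneg.2 (not_lt.1 hcon))
      (mul_self_nonneg (∏ i : {i : Fin m // i ∉ f}, (-d i)))
    linarith
  · intro hG
    obtain ⟨d, _, hd⟩ := backward G hG Finset.univ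
    exact ⟨d, fun f _ => hd f fun i _ => Finset.mem_univ i⟩
end
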